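/- In an entwined comonad-monad structure on a category C, if both (□εχδ): χ_{□A} ∘ ◇δ^{□□}_A ∘ ε^□_{◇□A} = id_{□◇□A} and (◇εχδ): ε^◇_{□◇A} ∘ □δ^{◇◇}_A ∘ χ_{◇A} = id_{◇□◇A} hold for all objects A, then the equation (□◇): ◇□ε^◇_A ∘ ε^□_{◇□A} = ε^◇_{□◇A} ∘ □◇ε^□_A holds for all objects A. -/

import Mathlib

open CategoryTheory

universe v u

/-- An entwined comonad-monad structure on a category `C`: a comonad
`(□, ε^□, δ^{□□})`, a monad `(◇, ε^◇, δ^{◇◇})`, and a natural transformation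
`χ : ◇□ ⟶ □◇` satisfying the mixed distributive (entwining) laws.
(Composition `g ∘ f` of the paper is `f ≫ g` here.) -/
structure Entwined (C : Type u) [Category.{v} C] where
  /-- the endofunctor `□` -/
  box : C ⥤ C
  /-- the endofunctor `◇` -/
  dia : C ⥤ C
  /-- `ε^□ : □ ⟶ Id` -/
  εbox : box ⟶ 𝟭 C
  /-- `δ^{□□} : □ ⟶ □□` -/
  δbb : box ⟶ box ⋙ box
  /-- `ε^◇ : Id ⟶ ◇` -/
  εdia : 𝟭 C ⟶ dia
  /-- `δ^{◇◇} : ◇◇ ⟶ ◇` -/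
  δdd : dia ⋙ dia ⟶ dia
  /-- the entwining `χ : ◇□ ⟶ □◇` -/
  χ : box ⋙ dia ⟶ dia ⋙ box
  /-- `ε^□_{□A} ∘ δ^{□□}_A = id` -/
  box_counit_right : ∀ A : C, δbb.app A ≫ εbox.app (box.obj A) = 𝟙 (box.obj A)
  /-- `□ε^□_A ∘ δ^{□□}_A = id` -/
  box_counit_left : ∀ A : C, δbb.app A ≫ box.map (εbox.app A) = 𝟙 (box.obj A)
  /-- `□δ^{□□}_A ∘ δ^{□□}_A = δ^{□□}_{□A} ∘ δ^{□□}_A` -/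
  box_coassoc : ∀ A : C, δbb.app A ≫ box.map (δbb.app A) = δbb.app A ≫ δbb.app (box.obj A)
  /-- `δ^{◇◇}_A ∘ ε^◇_{◇A} = id` -/
  dia_unit_right : ∀ A : C, εdia.app (dia.obj A) ≫ δdd.app A = 𝟙 (dia.obj A)
  /-- `δ^{◇◇}_A ∘ ◇ε^◇_A = id` -/
  dia_unit_left : ∀ A : C, dia.map (εdia.app A) ≫ δdd.app A = 𝟙 (dia.obj A)
  /-- `δ^{◇◇}_A ∘ ◇δ^{◇◇}_A = δ^{◇◇}_A ∘ δ^{◇◇}_{◇A}` -/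
  dia_assoc : ∀ A : C, dia.map (δdd.app A) ≫ δdd.app A = δdd.app (dia.obj A) ≫ δdd.app A
  /-- `(ε^□χ)`: `ε^□_{◇A} ∘ χ_A = ◇ε^□_A` -/
  εbox_χ : ∀ A : C, χ.app A ≫ εbox.app (dia.obj A) = dia.map (εbox.app A)
  /-- `(ε^◇χ)`: `χ_A ∘ ε^◇_{□A} = □ε^◇_A` -/
  εdia_χ : ∀ A : C, εdia.app (box.obj A) ≫ χ.app A = box.map (εdia.app A)
  /-- `(δ^{□□}χ)`: `δ^{□□}_{◇A} ∘ χ_A = □χ_A ∘ χ_{□A} ∘ ◇δ^{□□}_A` -/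
  δbb_χ : ∀ A : C, χ.app A ≫ δbb.app (dia.obj A) =
      dia.map (δbb.app A) ≫ χ.app (box.obj A) ≫ box.map (χ.app A)
  /-- `(δ^{◇◇}χ)`: `χ_A ∘ δ^{◇◇}_{□A} = □δ^{◇◇}_A ∘ χ_{◇A} ∘ ◇χ_A` -/
  δdd_χ : ∀ A : C, δdd.app (box.obj A) ≫ χ.app A =
      dia.map (χ.app A) ≫ χ.app (dia.obj A) ≫ box.map (δdd.app A)

/-!
Both sides of `(□◇)` are equal to `ε^◇_{□◇A} ∘ χ_A ∘ ε^□_{◇□A}`. Since `□ε^□_A` is a retraction of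
`δ^{□□}_A`, naturality of `χ` turns `(□εχδ)` into `□◇ε^□_A = χ_A ∘ ε^□_{◇□A}`; dually, `(◇εχδ)`
gives `◇□ε^◇_A = ε^◇_{□◇A} ∘ χ_A`.
-/

namespace Entwined

theorem map_retraction_eq_comp_app {B D : Type*} [Category* B] [Category* D] {F G : B ⥤ D}
    (α : F ⟶ G) {X Y : B} {r : Y ⟶ X} {s : F.obj X ⟶ F.obj Y} (hsr : s ≫ F.map r = 𝟙 (F.obj X))
    {e : G.obj Y ⟶ F.obj X} (he : e ≫ s ≫ α.app Y = 𝟙 (G.obj Y)) :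
    G.map r = e ≫ α.app X :=
  calc G.map r
    _ = (e ≫ s ≫ α.app Y) ≫ G.map r := by rw [he, Category.id_comp]
    _ = e ≫ (s ≫ F.map r) ≫ α.app X := by simp only [Category.assoc, α.naturality]
    _ = e ≫ α.app X := by rw [hsr, Category.id_comp]

theorem map_section_eq_app_comp {B D : Type*} [Category* B] [Category* D] {F G : B ⥤ D}
    (α : F ⟶ G) {X Y : B} {s : X ⟶ Y} {r : G.obj Y ⟶ G.obj X} (hsr : G.map s ≫ r = 𝟙 (G.obj X))
    {e : G.obj X ⟶ F.obj Y} (he : α.app Y ≫ r ≫ e = 𝟙 (F.obj Y)) :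
    F.map s = α.app X ≫ e :=
  calc F.map s
    _ = F.map s ≫ α.app Y ≫ r ≫ e := by rw [he, Category.comp_id]
    _ = α.app X ≫ (G.map s ≫ r) ≫ e := by simp only [Category.assoc, α.naturality_assoc]
    _ = α.app X ≫ e := by rw [hsr, Category.id_comp]

theorem boxdia_of_chi_delta_eqs_general {C : Type*} [Category* C] {box dia : C ⥤ C}
    (εbox : ∀ X : C, box.obj X ⟶ X) (εdia : ∀ X : C, X ⟶ dia.obj X)
    (χ : box ⋙ dia ⟶ dia ⋙ box) {A : C}
    {δbb : box.obj A ⟶ box.obj (box.obj A)} {δdd : dia.obj (dia.obj A) ⟶ dia.obj A}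
    (box_counit : δbb ≫ box.map (εbox A) = 𝟙 (box.obj A))
    (dia_unit : dia.map (εdia A) ≫ δdd = 𝟙 (dia.obj A))
    (h1 : εbox (dia.obj (box.obj A)) ≫ dia.map δbb ≫ χ.app (box.obj A) =
      𝟙 (box.obj (dia.obj (box.obj A))))
    (h2 : χ.app (dia.obj A) ≫ box.map δdd ≫ εdia (box.obj (dia.obj A)) =
      𝟙 (dia.obj (box.obj (dia.obj A)))) :
    εbox (dia.obj (box.obj A)) ≫ dia.map (box.map (εdia A)) =
      box.map (dia.map (εbox A)) ≫ εdia (box.obj (dia.obj A)) := by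
  have dia_box_counit : dia.map δbb ≫ dia.map (box.map (εbox A)) = 𝟙 (dia.obj (box.obj A)) := by
    rw [← dia.map_comp, box_counit, dia.map_id]
  have box_dia_unit : box.map (dia.map (εdia A)) ≫ box.map δdd = 𝟙 (box.obj (dia.obj A)) := by
    rw [← box.map_comp, dia_unit, box.map_id]
  have box_dia_εbox : box.map (dia.map (εbox A)) = εbox (dia.obj (box.obj A)) ≫ χ.app A :=
    map_retraction_eq_comp_app χ dia_box_counit h1
  have dia_box_εdia : dia.map (box.map (εdia A)) = χ.app A ≫ εdia (box.obj (dia.obj A)) :=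
    map_section_eq_app_comp χ box_dia_unit h2
  rw [box_dia_εbox, dia_box_εdia]
  exact (Category.assoc _ _ _).symm

end Entwined

/-- If both `(□εχδ)`: `χ_{□A} ∘ ◇δ^{□□}_A ∘ ε^□_{◇□A} = id_{□◇□A}` and `(◇εχδ)`:
`ε^◇_{□◇A} ∘ □δ^{◇◇}_A ∘ χ_{◇A} = id_{◇□◇A}` hold for all `A`, then `(□◇)`:
`◇□ε^◇_A ∘ ε^□_{◇□A} = ε^◇_{□◇A} ∘ □◇ε^□_A` holds for all `A`. -/
theorem Entwined.boxdia_of_chi_delta_eqs {C : Type u} [Category.{v} C] (E : Entwined C)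
    (h1 : ∀ A : C,
      E.εbox.app (E.dia.obj (E.box.obj A)) ≫ E.dia.map (E.δbb.app A) ≫
        E.χ.app (E.box.obj A) = 𝟙 (E.box.obj (E.dia.obj (E.box.obj A))))
    (h2 : ∀ A : C,
      E.χ.app (E.dia.obj A) ≫ E.box.map (E.δdd.app A) ≫
        E.εdia.app (E.box.obj (E.dia.obj A)) = 𝟙 (E.dia.obj (E.box.obj (E.dia.obj A)))) :
    ∀ A : C,
      E.εbox.app (E.dia.obj (E.box.obj A)) ≫ E.dia.map (E.box.map (E.εdia.app A)) =
        E.box.map (E.dia.map (E.εbox.app A)) ≫ E.εdia.app (E.box.obj (E.dia.obj A)) :=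
  fun A => boxdia_of_chi_delta_eqs_general E.εbox.app E.εdia.app E.χ
    (E.box_counit_left A) (E.dia_unit_left A) (h1 A) (h2 A)
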